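/- Let M be the double star matrix built from a, b, x = [x_i], y = [y_i], z = [z_i], w = [w_i] over a field 𝔽 with involution, and assume the four elements s = Σ_i x_i·conj(x_i), u = Σ_i y_i·conj(y_i), t = Σ_i z_i·conj(z_i), v = Σ_i w_i·conj(w_i) are all nonzero. Then the Moore–Penrose inverse of M is N = [[0, u^{-1} y*, 0, 0], [s^{-1} x̄, 0, 0, −s^{-1} a v^{-1} x̄ w*], [0, 0, 0, v^{-1} w*], [0, −t^{-1} b u^{-1} z̄ y*, t^{-1} z̄, 0]] (with diagonal blocks of sizes 1, m, 1, n, where x̄ denotes entrywise conjugation and y* the conjugate transpose); that is, N satisfies MNM = M, NMN = N, (MN)* = MN, and (NM)* = NM. -/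

import Mathlib

open Matrix

/-- The double star matrix of order `m + n + 2`, in block form (blocks of sizes 1, m, 1, n):
`M = [[0, xᵀ, a, 0], [y, 0, 0, 0], [b, 0, 0, zᵀ], [0, 0, w, 0]]`. -/
def doubleStar {F : Type*} [Field F] {m n : ℕ} (a b : F)
    (x y : Fin m → F) (z w : Fin n → F) :
    Matrix (Fin 1 ⊕ Fin m ⊕ Fin 1 ⊕ Fin n) (Fin 1 ⊕ Fin m ⊕ Fin 1 ⊕ Fin n) F :=
  Matrix.of fun i j =>
    match i, j with
    | Sum.inl _, Sum.inr (Sum.inl j) => x j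
    | Sum.inl _, Sum.inr (Sum.inr (Sum.inl _)) => a
    | Sum.inr (Sum.inl i), Sum.inl _ => y i
    | Sum.inr (Sum.inr (Sum.inl _)), Sum.inl _ => b
    | Sum.inr (Sum.inr (Sum.inl _)), Sum.inr (Sum.inr (Sum.inr j)) => z j
    | Sum.inr (Sum.inr (Sum.inr i)), Sum.inr (Sum.inr (Sum.inl _)) => w i
    | _, _ => 0

/-- The matrix `[[0, u⁻¹ y*, 0, 0], [s⁻¹ x̄, 0, 0, -s⁻¹ a v⁻¹ x̄ w*], [0, 0, 0, v⁻¹ w*],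
[0, -t⁻¹ b u⁻¹ z̄ y*, t⁻¹ z̄, 0]]` (blocks of sizes 1, m, 1, n). -/
def doubleStarMP {F : Type*} [Field F] [StarRing F] {m n : ℕ} (a b s u t v : F)
    (x y : Fin m → F) (z w : Fin n → F) :
    Matrix (Fin 1 ⊕ Fin m ⊕ Fin 1 ⊕ Fin n) (Fin 1 ⊕ Fin m ⊕ Fin 1 ⊕ Fin n) F :=
  Matrix.of fun i j =>
    match i, j with
    | Sum.inl _, Sum.inr (Sum.inl j) => u⁻¹ * star (y j)
    | Sum.inr (Sum.inl i), Sum.inl _ => s⁻¹ * star (x i)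
    | Sum.inr (Sum.inl i), Sum.inr (Sum.inr (Sum.inr j)) =>
        -(s⁻¹ * a * v⁻¹ * star (x i) * star (w j))
    | Sum.inr (Sum.inr (Sum.inl _)), Sum.inr (Sum.inr (Sum.inr j)) => v⁻¹ * star (w j)
    | Sum.inr (Sum.inr (Sum.inr i)), Sum.inr (Sum.inl j) =>
        -(t⁻¹ * b * u⁻¹ * star (z i) * star (y j))
    | Sum.inr (Sum.inr (Sum.inr i)), Sum.inr (Sum.inr (Sum.inl _)) => t⁻¹ * star (z i)
    | _, _ => 0

set_option maxHeartbeats 4000000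

def dsP {F : Type*} [Field F] [StarRing F] {m n : ℕ} (u v : F)
    (y : Fin m → F) (w : Fin n → F) :
    Matrix (Fin 1 ⊕ Fin m ⊕ Fin 1 ⊕ Fin n) (Fin 1 ⊕ Fin m ⊕ Fin 1 ⊕ Fin n) F :=
  Matrix.of fun i j =>
    match i, j with
    | Sum.inl _, Sum.inl _ => 1
    | Sum.inr (Sum.inl i), Sum.inr (Sum.inl j) => u⁻¹ * (y i * star (y j))
    | Sum.inr (Sum.inr (Sum.inl _)), Sum.inr (Sum.inr (Sum.inl _)) => 1
    | Sum.inr (Sum.inr (Sum.inr i)), Sum.inr (Sum.inr (Sum.inr j)) => v⁻¹ * (w i * star (w j))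
    | _, _ => 0

lemma dsP_herm {F : Type*} [Field F] [StarRing F] {m n : ℕ} (u v : F)
    (y : Fin m → F) (w : Fin n → F) (hu : star u = u) (hv : star v = v) :
    (dsP u v y w)ᴴ = dsP u v y w := by
  ext i j
  rcases i with i | i | i | i <;> rcases j with j | j | j | j <;>
    simp [dsP, Matrix.conjTranspose_apply, star_inv₀, hu, hv] <;> exact Or.inl (by ring)

/-- If `s, u, t, v` are all nonzero, then the Moore–Penrose inverse of the double star
matrix `M` is `N = doubleStarMP a b s u t v x y z w`. -/
theorem doubleStar_moorePenrose_eq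
    {F : Type*} [Field F] [StarRing F] {m n : ℕ} (a b : F) (ha : a ≠ 0) (hb : b ≠ 0)
    (x y : Fin m → F) (z w : Fin n → F)
    (hx : ∀ i, x i ≠ 0) (hy : ∀ i, y i ≠ 0) (hz : ∀ i, z i ≠ 0) (hw : ∀ i, w i ≠ 0)
    (s u t v : F)
    (hs : s = ∑ i, x i * star (x i)) (hu : u = ∑ i, y i * star (y i))
    (ht : t = ∑ i, z i * star (z i)) (hv : v = ∑ i, w i * star (w i))
    (hs0 : s ≠ 0) (hu0 : u ≠ 0) (ht0 : t ≠ 0) (hv0 : v ≠ 0) :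
    (doubleStar a b x y z w) * (doubleStarMP a b s u t v x y z w) * (doubleStar a b x y z w)
        = doubleStar a b x y z w ∧
      (doubleStarMP a b s u t v x y z w) * (doubleStar a b x y z w) *
          (doubleStarMP a b s u t v x y z w) = doubleStarMP a b s u t v x y z w ∧
      ((doubleStar a b x y z w) * (doubleStarMP a b s u t v x y z w))ᴴ
        = (doubleStar a b x y z w) * (doubleStarMP a b s u t v x y z w) ∧
      ((doubleStarMP a b s u t v x y z w) * (doubleStar a b x y z w))ᴴ
        = (doubleStarMP a b s u t v x y z w) * (doubleStar a b x y z w) := by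
  have hsS : star s = s := by
    rw [hs, star_sum]; exact Finset.sum_congr rfl fun i _ => by simp [mul_comm]
  have huS : star u = u := by
    rw [hu, star_sum]; exact Finset.sum_congr rfl fun i _ => by simp [mul_comm]
  have htS : star t = t := by
    rw [ht, star_sum]; exact Finset.sum_congr rfl fun i _ => by simp [mul_comm]
  have hvS : star v = v := by
    rw [hv, star_sum]; exact Finset.sum_congr rfl fun i _ => by simp [mul_comm]
  have ex : ∀ c : F, ∑ i, c * (x i * star (x i)) = c * s := fun c => by rw [hs, Finset.mul_sum]
  have ey : ∀ c : F, ∑ i, c * (y i * star (y i)) = c * u := fun c => by rw [hu, Finset.mul_sum]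
  have ez : ∀ c : F, ∑ i, c * (z i * star (z i)) = c * t := fun c => by rw [ht, Finset.mul_sum]
  have ew : ∀ c : F, ∑ i, c * (w i * star (w i)) = c * v := fun c => by rw [hv, Finset.mul_sum]
  have hMN : doubleStar a b x y z w * doubleStarMP a b s u t v x y z w = dsP u v y w := by
    ext i j
    rcases i with i | i | i | i <;> rcases j with j | j | j | j <;>
      simp [dsP, doubleStar, doubleStarMP, Matrix.mul_apply]
    · trans ∑ i, s⁻¹ * (x i * star (x i))
      · exact Finset.sum_congr rfl fun i _ => by ring
      · rw [ex]; field_simp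
    · have : ∑ i, x i * (s⁻¹ * a * v⁻¹ * star (x i) * star (w j))
          = (s⁻¹ * a * v⁻¹ * star (w j)) * s := by
        rw [← ex]; exact Finset.sum_congr rfl fun i _ => by ring
      rw [this]; field_simp; try ring
    · ring
    · have : ∑ i, z i * (t⁻¹ * b * u⁻¹ * star (z i) * star (y j))
          = (t⁻¹ * b * u⁻¹ * star (y j)) * t := by
        rw [← ez]; exact Finset.sum_congr rfl fun i _ => by ring
      rw [this]; field_simp; try ring
    · trans ∑ i, t⁻¹ * (z i * star (z i))
      · exact Finset.sum_congr rfl fun i _ => by ring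
      · rw [ez]; field_simp
    · ring
  have hNM : doubleStarMP a b s u t v x y z w * doubleStar a b x y z w
      = dsP s t (fun i => star (x i)) (fun i => star (z i)) := by
    ext i j
    rcases i with i | i | i | i <;> rcases j with j | j | j | j <;>
      simp [dsP, doubleStar, doubleStarMP, Matrix.mul_apply]
    · trans ∑ i, u⁻¹ * (y i * star (y i))
      · exact Finset.sum_congr rfl fun i _ => by ring
      · rw [ey]; field_simp
    · ring
    · have : ∑ k, s⁻¹ * a * v⁻¹ * star (x i) * star (w k) * w k
          = (s⁻¹ * a * v⁻¹ * star (x i)) * v := by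
        rw [← ew]; exact Finset.sum_congr rfl fun i _ => by ring
      rw [this]; field_simp; try ring
    · trans ∑ i, v⁻¹ * (w i * star (w i))
      · exact Finset.sum_congr rfl fun i _ => by ring
      · rw [ew]; field_simp
    · have : ∑ k, t⁻¹ * b * u⁻¹ * star (z i) * star (y k) * y k
          = (t⁻¹ * b * u⁻¹ * star (z i)) * u := by
        rw [← ey]; exact Finset.sum_congr rfl fun i _ => by ring
      rw [this]; field_simp; try ring
    · ring
  refine ⟨?_, ?_, ?_, ?_⟩
  · rw [hMN]
    ext i j
    rcases i with i | i | i | i <;> rcases j with j | j | j | j <;>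
      simp [dsP, doubleStar, Matrix.mul_apply]
    · trans ∑ k, (u⁻¹ * y i) * (y k * star (y k))
      · exact Finset.sum_congr rfl fun i _ => by ring
      · rw [ey]; field_simp
    · trans ∑ k, (v⁻¹ * w i) * (w k * star (w k))
      · exact Finset.sum_congr rfl fun i _ => by ring
      · rw [ew]; field_simp
  · rw [hNM]
    ext i j
    rcases i with i | i | i | i <;> rcases j with j | j | j | j <;>
      simp [dsP, doubleStarMP, Matrix.mul_apply]
    · trans ∑ k, (s⁻¹ * s⁻¹ * star (x i)) * (x k * star (x k))
      · exact Finset.sum_congr rfl fun i _ => by ring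
      · rw [ex]; field_simp
    · trans ∑ k, (s⁻¹ * star (x i) * s⁻¹ * a * v⁻¹ * star (w j)) * (x k * star (x k))
      · exact Finset.sum_congr rfl fun i _ => by ring
      · rw [ex]; field_simp
    · trans ∑ k, (t⁻¹ * star (z i) * t⁻¹ * b * u⁻¹ * star (y j)) * (z k * star (z k))
      · exact Finset.sum_congr rfl fun i _ => by ring
      · rw [ez]; field_simp
    · trans ∑ k, (t⁻¹ * t⁻¹ * star (z i)) * (z k * star (z k))
      · exact Finset.sum_congr rfl fun i _ => by ring
      · rw [ez]; field_simp
  · rw [hMN]; exact dsP_herm u v y w huS hvS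
  · rw [hNM]; exact dsP_herm s t _ _ hsS htS
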